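/- arXiv:1907.03792 — 2 statements merged into one kernel-verified Lean document; each statement's English description precedes it below -/
import Mathlib

section
/- The function h(γ) = E[tanh(√γ·Z + γ)], for Z standard Gaussian, is nondecreasing on [0,∞), with h(0) = 0 and h(γ) → 1 as γ → ∞. -/
open MeasureTheory ProbabilityTheory Real Filter

lemma aux_cont_tanh : Continuous Real.tanh := by
  have : Real.tanh = fun x => Real.sinh x / Real.cosh x := by
    funext x; exact Real.tanh_eq_sinh_div_cosh x
  rw [this]
  exact Real.continuous_sinh.div Real.continuous_cosh (fun x => (Real.cosh_pos x).ne')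

lemma aux_tanh_int (s c : ℝ) :
    Integrable (fun z => Real.tanh (s * z + c)) (gaussianReal 0 1) := by
  refine Integrable.of_bound (C := 1)
    (aux_cont_tanh.comp (by fun_prop)).aestronglyMeasurable (ae_of_all _ fun z => ?_)
  rw [Real.norm_eq_abs]
  exact (Real.abs_tanh_lt_one _).le

lemma aux_sech_bound (x : ℝ) : (Real.cosh x)⁻¹ ≤ 1 :=
  inv_le_one_of_one_le₀ (Real.one_le_cosh x)

lemma aux_sech_int (s : ℝ) :
    Integrable (fun z => (Real.cosh (s * z))⁻¹) (gaussianReal 0 1) := by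
  refine Integrable.of_bound (C := 1) (Continuous.aestronglyMeasurable ?_)
    (ae_of_all _ fun z => ?_)
  · exact (Real.continuous_cosh.comp (by fun_prop)).inv₀ (fun x => (Real.cosh_pos _).ne')
  · rw [Real.norm_eq_abs, abs_of_pos (inv_pos.2 (Real.cosh_pos _))]
    exact aux_sech_bound _

lemma aux_one_sub_tanh (x : ℝ) :
    1 - Real.tanh x = Real.exp (-x) * (Real.cosh x)⁻¹ := by
  have h := (Real.cosh_pos x).ne'
  rw [Real.tanh_eq_sinh_div_cosh, ← Real.cosh_sub_sinh]
  field_simp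

/-- The key identity: `1 - h(s²) = e^{-s²/2} E[sech(s Z)]`. -/
lemma aux_key (s : ℝ) :
    ∫ z, Real.tanh (s * z + s ^ 2) ∂(gaussianReal 0 1)
      = 1 - Real.exp (-(s ^ 2 / 2)) * ∫ z, (Real.cosh (s * z))⁻¹ ∂(gaussianReal 0 1) := by
  have h1 : ∫ z, (1 - Real.tanh (s * z + s ^ 2)) ∂(gaussianReal 0 1)
      = 1 - ∫ z, Real.tanh (s * z + s ^ 2) ∂(gaussianReal 0 1) := by
    rw [integral_sub (integrable_const _) (aux_tanh_int _ _)]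
    simp
  have h2 : ∫ z, (1 - Real.tanh (s * z + s ^ 2)) ∂(gaussianReal 0 1)
      = Real.exp (-(s ^ 2 / 2)) * ∫ z, (Real.cosh (s * z))⁻¹ ∂(gaussianReal 0 1) := by
    rw [integral_gaussianReal_eq_integral_smul one_ne_zero,
      integral_gaussianReal_eq_integral_smul one_ne_zero, ← integral_const_mul,
      ← integral_sub_right_eq_self _ s]
    refine integral_congr_ae (ae_of_all _ fun z => ?_)
    have e : s * (z - s) + s ^ 2 = s * z := by ring
    simp only [smul_eq_mul, gaussianPDFReal, e, aux_one_sub_tanh]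
    have e2 : Real.exp (-(z - s - 0) ^ 2 / (2 * ((1 : NNReal) : ℝ))) * Real.exp (-(s * z))
        = Real.exp (-(s ^ 2 / 2)) * Real.exp (-(z - 0) ^ 2 / (2 * ((1 : NNReal) : ℝ))) := by
      rw [← Real.exp_add, ← Real.exp_add]
      congr 1
      push_cast
      ring
    linear_combination (√(2 * π * ((1 : NNReal) : ℝ)))⁻¹ * (Real.cosh (s * z))⁻¹ * e2
  linarith

lemma aux_key' (γ : ℝ) (h : 0 ≤ γ) :
    ∫ z, Real.tanh (Real.sqrt γ * z + γ) ∂(gaussianReal 0 1)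
      = 1 - Real.exp (-(γ / 2)) * ∫ z, (Real.cosh (√γ * z))⁻¹ ∂(gaussianReal 0 1) := by
  have := aux_key (√γ)
  rwa [Real.sq_sqrt h] at this

/-- `h(γ) = E[tanh(√γ·Z + γ)]` (`Z ~ N(0,1)`) is nondecreasing on `[0,∞)`,
`h(0) = 0`, and `h(γ) → 1` as `γ → ∞`. -/
theorem stmt7 :
    MonotoneOn (fun γ : ℝ => ∫ z, Real.tanh (Real.sqrt γ * z + γ) ∂(gaussianReal 0 1))
      (Set.Ici 0)
    ∧ (∫ z, Real.tanh (Real.sqrt (0 : ℝ) * z + 0) ∂(gaussianReal 0 1)) = 0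
    ∧ Tendsto (fun γ : ℝ => ∫ z, Real.tanh (Real.sqrt γ * z + γ) ∂(gaussianReal 0 1))
        atTop (nhds 1) := by
  have nonneg : ∀ s : ℝ, 0 ≤ ∫ z, (Real.cosh (s * z))⁻¹ ∂(gaussianReal 0 1) := fun s =>
    integral_nonneg fun z => (inv_pos.2 (Real.cosh_pos _)).le
  refine ⟨?_, by simp, ?_⟩
  · intro a ha b hb hab
    simp only [Set.mem_Ici] at ha hb
    simp only [aux_key' a ha, aux_key' b hb]
    apply sub_le_sub_left
    refine mul_le_mul (Real.exp_le_exp.2 (by linarith)) ?_ (nonneg _) (Real.exp_pos _).le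
    refine integral_mono (aux_sech_int _) (aux_sech_int _) fun z => ?_
    refine inv_anti₀ (Real.cosh_pos _) (Real.cosh_le_cosh.2 ?_)
    rw [abs_mul, abs_mul, abs_of_nonneg (Real.sqrt_nonneg _), abs_of_nonneg (Real.sqrt_nonneg _)]
    exact mul_le_mul_of_nonneg_right (Real.sqrt_le_sqrt hab) (abs_nonneg _)
  · have le1 : ∀ s : ℝ, ∫ z, (Real.cosh (s * z))⁻¹ ∂(gaussianReal 0 1) ≤ 1 := fun s => by
      have := integral_mono (aux_sech_int s) (integrable_const (1 : ℝ))
        (fun z => aux_sech_bound (s * z))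
      simpa using this
    have hexp : Tendsto (fun γ : ℝ => Real.exp (-(γ / 2))) atTop (nhds 0) :=
      Real.tendsto_exp_neg_atTop_nhds_zero.comp (tendsto_id.atTop_div_const (by norm_num))
    have h0 : Tendsto (fun γ : ℝ => Real.exp (-(γ / 2)) *
        ∫ z, (Real.cosh (√γ * z))⁻¹ ∂(gaussianReal 0 1)) atTop (nhds 0) :=
      squeeze_zero (fun γ => mul_nonneg (Real.exp_pos _).le (nonneg _))
        (fun γ => mul_le_of_le_one_right (Real.exp_pos _).le (le1 _)) hexp
    have h1 := h0.const_sub 1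
    rw [sub_zero] at h1
    refine h1.congr' ?_
    filter_upwards [eventually_ge_atTop 0] with γ hγ
    exact (aux_key' γ hγ).symm
end

section
/- The function h(γ) = E[tanh(√γ·Z + γ)], for Z standard Gaussian, is concave on [0,∞). -/
open MeasureTheory ProbabilityTheory Real

lemma aux_sech_deriv (x : ℝ) :
    HasDerivAt (fun x : ℝ => (Real.cosh x)⁻¹) (-Real.sinh x / Real.cosh x ^ 2) x :=
  (Real.hasDerivAt_cosh x).inv (Real.cosh_pos x).ne'

lemma aux_sech_deriv2 (x : ℝ) :
    HasDerivAt (fun x : ℝ => -Real.sinh x / Real.cosh x ^ 2)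
      ((Real.cosh x)⁻¹ - 2 * (-Real.sinh x / Real.cosh x ^ 2) * (-Real.sinh x / Real.cosh x)
        + 4 * (Real.sinh x ^ 2 / Real.cosh x ^ 3) - 2 * (Real.cosh x)⁻¹) x := by
  have hc := (Real.cosh_pos x).ne'
  have h := ((Real.hasDerivAt_sinh x).neg).div ((Real.hasDerivAt_cosh x).pow 2) (pow_ne_zero 2 hc)
  refine h.congr_deriv ?_
  simp only [Pi.pow_apply, Pi.neg_apply]
  field_simp
  ring

lemma aux_sech_deriv2' (x : ℝ) :
    HasDerivAt (fun x : ℝ => -Real.sinh x / Real.cosh x ^ 2)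
      ((Real.cosh x)⁻¹ - 2 * ((Real.cosh x)⁻¹) ^ 3) x := by
  refine (aux_sech_deriv2 x).congr_deriv ?_
  have hc := (Real.cosh_pos x).ne'
  have := Real.sinh_sq x
  field_simp
  rw [this]
  ring

lemma aux_abs_d1 (x : ℝ) : |-Real.sinh x / Real.cosh x ^ 2| ≤ 1 := by
  have hc := Real.one_le_cosh x
  have := Real.sinh_sq x
  rw [abs_div, abs_neg, abs_of_pos (by positivity : 0 < Real.cosh x ^ 2),
    div_le_one (by positivity)]
  apply abs_le_of_sq_le_sq _ (by positivity)
  nlinarith [sq_nonneg (Real.cosh x ^ 2)] 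

lemma aux_inv_mem (x : ℝ) : 0 < (Real.cosh x)⁻¹ ∧ (Real.cosh x)⁻¹ ≤ 1 :=
  ⟨inv_pos.2 (Real.cosh_pos x), inv_le_one_of_one_le₀ (Real.one_le_cosh x)⟩

lemma aux_cont_inv : Continuous (fun x : ℝ => (Real.cosh x)⁻¹) :=
  Real.continuous_cosh.inv₀ (fun x => (Real.cosh_pos x).ne')

lemma aux_cont_d1 : Continuous (fun x : ℝ => -Real.sinh x / Real.cosh x ^ 2) :=
  continuous_iff_continuousAt.2 fun x => (aux_sech_deriv2' x).continuousAt

lemma aux_int_bdd {f : ℝ → ℝ} (hf : Continuous f) (C : ℝ) (h : ∀ x, |f x| ≤ C) :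
    Integrable f (gaussianReal 0 1) :=
  Integrable.of_bound hf.aestronglyMeasurable C (Filter.Eventually.of_forall h)

lemma aux_phi (z : ℝ) : gaussianPDFReal 0 1 z = (√(2 * π))⁻¹ * rexp (-z ^ 2 / 2) := by
  simp [gaussianPDFReal]

lemma aux_phi_deriv (z : ℝ) :
    HasDerivAt (gaussianPDFReal 0 1) (-(z * gaussianPDFReal 0 1 z)) z := by
  have : gaussianPDFReal 0 1 = fun z => (√(2 * π))⁻¹ * rexp (-z ^ 2 / 2) := funext aux_phi
  rw [this]
  have h := ((((hasDerivAt_id z).pow 2).neg.div_const 2).exp).const_mul (√(2 * π))⁻¹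
  refine h.congr_deriv ?_
  simp
  ring

lemma aux_intphi {f : ℝ → ℝ} (h : Integrable f (gaussianReal 0 1)) :
    Integrable (fun z => gaussianPDFReal 0 1 z * f z) := by
  rw [gaussianReal_of_var_ne_zero 0 one_ne_zero,
    integrable_withDensity_iff_integrable_smul' (measurable_gaussianPDF 0 1)
      (Filter.Eventually.of_forall fun _ => gaussianPDF_lt_top)] at h
  simpa [toReal_gaussianPDF] using h

lemma aux_intid : Integrable (fun z : ℝ => z) (gaussianReal 0 1) :=
  (memLp_id_gaussianReal 1).integrable (by simp)

lemma aux_stein (u u' : ℝ → ℝ) (hu : ∀ z, HasDerivAt u (u' z) z) (hu' : Continuous u') (C D : ℝ)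
    (hC : ∀ z, |u z| ≤ C) (hD : ∀ z, |u' z| ≤ D) :
    ∫ z, u z * z ∂(gaussianReal 0 1) = ∫ z, u' z ∂(gaussianReal 0 1) := by
  have cu : Continuous u := continuous_iff_continuousAt.2 fun x => (hu x).continuousAt
  rw [integral_gaussianReal_eq_integral_smul one_ne_zero,
    integral_gaussianReal_eq_integral_smul one_ne_zero]
  have i1 := aux_intphi (aux_int_bdd cu C hC)
  have i2 := aux_intphi (aux_int_bdd hu' D hD)
  have i3 : Integrable (fun z => gaussianPDFReal 0 1 z * (u z * z)) :=
    aux_intphi (aux_intid.bdd_mul cu.aestronglyMeasurable (Filter.Eventually.of_forall hC))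
  have := integral_mul_deriv_eq_deriv_mul_of_integrable (u := u) (u' := u')
    (v := gaussianPDFReal 0 1) (v' := fun z => -(z * gaussianPDFReal 0 1 z)) (fun z _ => hu z)
    (fun z _ => aux_phi_deriv z)
    (by refine i3.neg.congr (Filter.Eventually.of_forall fun z => ?_); simp; ring)
    (by refine i2.congr (Filter.Eventually.of_forall fun z => ?_); simp; ring)
    (by refine i1.congr (Filter.Eventually.of_forall fun z => ?_); simp; ring)
  have e1 : ∫ z, gaussianPDFReal 0 1 z • (u z * z)
      = - ∫ z, u z * -(z * gaussianPDFReal 0 1 z) := by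
    rw [← integral_neg]; congr 1; ext z; simp; ring
  rw [e1, this, neg_neg]
  congr 1; ext z; simp; ring

/-- The change of measure identity. -/
lemma aux_h_eq (γ : ℝ) (hγ : 0 ≤ γ) :
    ∫ z, Real.tanh (√γ * z + γ) ∂(gaussianReal 0 1)
      = 1 - rexp (-γ / 2) * ∫ z, (Real.cosh (√γ * z))⁻¹ ∂(gaussianReal 0 1) := by
  obtain ⟨s, hs0, rfl⟩ : ∃ s : ℝ, 0 ≤ s ∧ γ = s ^ 2 := ⟨√γ, sqrt_nonneg _, (sq_sqrt hγ).symm⟩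
  rw [sqrt_sq hs0]
  have key : ∀ x : ℝ, Real.tanh x = 1 - rexp (-x) * (Real.cosh x)⁻¹ := by
    intro x
    rw [Real.tanh_eq_sinh_div_cosh, ← Real.cosh_sub_sinh]
    have := (Real.cosh_pos x).ne'
    field_simp
    ring
  have hb : ∀ x : ℝ, |rexp (-x) * (Real.cosh x)⁻¹| ≤ 2 := by
    intro x
    rw [abs_of_pos (mul_pos (exp_pos _) (aux_inv_mem x).1), ← div_eq_mul_inv,
      div_le_iff₀ (Real.cosh_pos x), Real.cosh_eq]
    linarith [exp_pos x]
  have hcont : Continuous (fun x : ℝ => rexp (-x) * (Real.cosh x)⁻¹) :=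
    (by fun_prop : Continuous fun x : ℝ => rexp (-x)).mul aux_cont_inv
  simp only [key]
  rw [integral_sub (integrable_const 1)
    (aux_int_bdd (f := fun z => rexp (-(s * z + s ^ 2)) * (Real.cosh (s * z + s ^ 2))⁻¹)
      (hcont.comp (by fun_prop : Continuous fun z : ℝ => s * z + s ^ 2)) 2 (fun z => hb _))]
  simp only [integral_const, probReal_univ, smul_eq_mul, mul_one]
  congr 1
  rw [integral_gaussianReal_eq_integral_smul one_ne_zero,
    integral_gaussianReal_eq_integral_smul one_ne_zero, ← integral_const_mul,
    ← integral_add_right_eq_self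
      (fun z => rexp (-s ^ 2 / 2) * (gaussianPDFReal 0 1 z • (Real.cosh (s * z))⁻¹)) s]
  congr 1
  ext z
  simp only [aux_phi, smul_eq_mul]
  have : rexp (-z ^ 2 / 2) * rexp (-(s * z + s ^ 2)) = rexp (-s ^ 2 / 2) * rexp (-(z + s) ^ 2 / 2) := by
    rw [← exp_add, ← exp_add]; congr 1; ring
  have e : s * (z + s) = s * z + s ^ 2 := by ring
  rw [e]
  linear_combination (√(2 * π))⁻¹ * (Real.cosh (s * z + s ^ 2))⁻¹ * this

lemma aux_deriv (γ : ℝ) (hγ : 0 < γ) :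
    HasDerivAt (fun γ : ℝ => ∫ z, (Real.cosh (√γ * z))⁻¹ ∂(gaussianReal 0 1))
      (1 / 2 * ∫ z, ((Real.cosh (√γ * z))⁻¹ - 2 * ((Real.cosh (√γ * z))⁻¹) ^ 3)
        ∂(gaussianReal 0 1)) γ := by
  have cs : ∀ s : ℝ, Continuous fun z : ℝ => s * z := fun s => by fun_prop
  have hs : 0 < √γ := sqrt_pos.2 hγ
  have h := (hasDerivAt_integral_of_dominated_loc_of_deriv_le (μ := gaussianReal 0 1)
    (F := fun γ z => (Real.cosh (√γ * z))⁻¹)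
    (F' := fun γ z => -Real.sinh (√γ * z) / Real.cosh (√γ * z) ^ 2 * (1 / (2 * √γ) * z))
    (x₀ := γ) (s := Set.Ioi (γ / 2)) (bound := fun z => 1 / (2 * √(γ / 2)) * |z|)
    (Ioi_mem_nhds (by linarith))
    (Filter.Eventually.of_forall fun x => (aux_cont_inv.comp (cs _)).aestronglyMeasurable)
    (aux_int_bdd (aux_cont_inv.comp (cs _)) 1
      (fun z => by
        rw [abs_of_pos (aux_inv_mem _).1]; exact (aux_inv_mem _).2))
    (((aux_cont_d1.comp (cs _)).mul (by fun_prop)).aestronglyMeasurable)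
    (Filter.Eventually.of_forall fun z x hx => by
      have hx' : γ / 2 < x := hx
      have h1 : 0 < √(γ / 2) := sqrt_pos.2 (by linarith)
      have h2 : √(γ / 2) ≤ √x := sqrt_le_sqrt hx'.le
      rw [norm_mul, norm_mul, norm_eq_abs, norm_eq_abs, norm_eq_abs,
        abs_of_pos (by have := h1.trans_le h2; positivity : 0 < 1 / (2 * √x))]
      calc _ ≤ 1 * (1 / (2 * √x) * |z|) := by
            gcongr
            exact aux_abs_d1 _
        _ ≤ _ := by rw [one_mul]; gcongr)
    (aux_intid.abs.const_mul _)
    (Filter.Eventually.of_forall fun z x hx => by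
      have hx' : γ / 2 < x := hx
      have hx0 : x ≠ 0 := by linarith
      exact HasDerivAt.comp (h₂ := fun y : ℝ => (Real.cosh y)⁻¹) (h := fun x : ℝ => √x * z) x
        (aux_sech_deriv (√x * z)) ((hasDerivAt_sqrt hx0).mul_const z))).2
  refine h.congr_deriv ?_
  have st := aux_stein (fun z => -Real.sinh (√γ * z) / Real.cosh (√γ * z) ^ 2)
    (fun z => ((Real.cosh (√γ * z))⁻¹ - 2 * ((Real.cosh (√γ * z))⁻¹) ^ 3) * √γ)
    (fun z => by
      have := (aux_sech_deriv2' (√γ * z)).comp z ((hasDerivAt_id z).const_mul √γ)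
      simpa [Function.comp_def] using this)
    (by
      have := aux_cont_inv.comp (cs √γ)
      simp only [Function.comp_def] at this
      exact (this.sub ((this.pow 3).const_mul 2)).mul_const _) 1 (2 * √γ)
    (fun z => aux_abs_d1 _)
    (fun z => by
      rw [abs_mul, abs_of_pos hs]
      gcongr
      obtain ⟨h1, h2⟩ := aux_inv_mem (√γ * z)
      have h3 : ((Real.cosh (√γ * z))⁻¹) ^ 3 ≤ 1 := pow_le_one₀ h1.le h2
      have h4 : 0 < ((Real.cosh (√γ * z))⁻¹) ^ 3 := by positivity
      rw [abs_le]; constructor <;> linarith)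
  have e : ∀ z : ℝ, -Real.sinh (√γ * z) / Real.cosh (√γ * z) ^ 2 * (1 / (2 * √γ) * z)
    = 1 / (2 * √γ) * (-Real.sinh (√γ * z) / Real.cosh (√γ * z) ^ 2 * z) := fun z => by ring
  simp only [e]
  rw [integral_const_mul, st, integral_mul_const]
  field_simp

lemma aux_int_pow (n : ℕ) (s : ℝ) :
    Integrable (fun z => ((Real.cosh (s * z))⁻¹) ^ n) (gaussianReal 0 1) :=
  aux_int_bdd ((aux_cont_inv.comp (by fun_prop : Continuous fun z : ℝ => s * z)).pow n) 1
    (fun z => by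
      obtain ⟨h1, h2⟩ := aux_inv_mem (s * z)
      rw [abs_of_pos (by positivity)]
      exact pow_le_one₀ h1.le h2)

lemma aux_deriv2 (γ : ℝ) (hγ : 0 < γ) :
    HasDerivAt (fun γ : ℝ => 1 - rexp (-γ / 2) * ∫ z, (Real.cosh (√γ * z))⁻¹ ∂(gaussianReal 0 1))
      (rexp (-γ / 2) * ∫ z, ((Real.cosh (√γ * z))⁻¹) ^ 3 ∂(gaussianReal 0 1)) γ := by
  have h := ((((hasDerivAt_id γ).neg.div_const 2).exp).mul (aux_deriv γ hγ)).const_sub 1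
  refine h.congr_deriv ?_
  have i1 := aux_int_pow 1 √γ
  simp only [pow_one] at i1
  rw [integral_sub i1 ((aux_int_pow 3 √γ).const_mul 2), integral_const_mul]
  simp
  ring

/-- `h(γ) = E[tanh(√γ·Z + γ)]` (`Z ~ N(0,1)`) is concave on `[0,∞)`. -/
theorem stmt8 :
    ConcaveOn ℝ (Set.Ici 0)
      (fun γ : ℝ => ∫ z, Real.tanh (Real.sqrt γ * z + γ) ∂(gaussianReal 0 1)) := by
  have main : ConcaveOn ℝ (Set.Ici 0) (fun γ : ℝ =>
      1 - rexp (-γ / 2) * ∫ z, (Real.cosh (√γ * z))⁻¹ ∂(gaussianReal 0 1)) := by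
    apply AntitoneOn.concaveOn_of_deriv (convex_Ici 0)
    · apply Continuous.continuousOn
      refine continuous_const.sub ((by fun_prop : Continuous fun γ : ℝ => rexp (-γ / 2)).mul ?_)
      refine continuous_of_dominated (bound := fun _ => 1) (fun γ => ?_) (fun γ => ?_)
        (integrable_const _) (Filter.Eventually.of_forall fun z => ?_)
      · exact (aux_cont_inv.comp (by fun_prop : Continuous fun z : ℝ => √γ * z)).aestronglyMeasurable
      · refine Filter.Eventually.of_forall fun z => ?_
        rw [norm_eq_abs, abs_of_pos (aux_inv_mem _).1]
        exact (aux_inv_mem _).2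
      · exact aux_cont_inv.comp (by fun_prop : Continuous fun γ : ℝ => √γ * z)
    · rw [interior_Ici]
      exact fun γ hγ => (aux_deriv2 γ hγ).differentiableAt.differentiableWithinAt
    · rw [interior_Ici]
      intro a ha b hb hab
      have ha' : 0 < a := ha
      have hb' : 0 < b := hb
      rw [(aux_deriv2 a ha').deriv, (aux_deriv2 b hb').deriv]
      refine mul_le_mul (exp_le_exp.2 (by linarith)) ?_
        (integral_nonneg fun z => (pow_pos (aux_inv_mem _).1 3).le) (exp_pos _).le
      refine integral_mono (aux_int_pow 3 _) (aux_int_pow 3 _) fun z => ?_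
      refine pow_le_pow_left₀ (aux_inv_mem _).1.le ?_ 3
      refine inv_anti₀ (Real.cosh_pos _) (Real.cosh_le_cosh.2 ?_)
      rw [abs_mul, abs_mul, abs_of_nonneg (sqrt_nonneg _), abs_of_nonneg (sqrt_nonneg _)]
      gcongr
  exact main.congr fun γ hγ => (aux_h_eq γ hγ).symm
end
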